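/- Let k ≥ 3 and let F(X) = Σ_{n≥0} |{π ∈ S_n : π avoids all three patterns 132, 12⋯k and 213⋯k}|·Xⁿ ∈ ℚ⟦X⟧. Set q_m = p_m − X²·p_{m−2}. Then F(X)·q_{k−1}(X) = q_{k−2}(X). (Equivalently, F(x) = (U_{k−2}(1/(2√x)) − x·U_{k−4}(1/(2√x))) / (√x·(U_{k−1}(1/(2√x)) − x·U_{k−3}(1/(2√x)))).) -/

import Mathlib

/-- A pattern is a permutation of `{1,…,k}` for some `k`. -/
def Pattern : Type := Σ k : ℕ, Equiv.Perm (Fin k)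

/-- `IsOccurrence τ π f` says that the strictly increasing tuple of indices `f` is an
occurrence of the pattern `τ` in the permutation `π`, i.e. `π ∘ f` is order-isomorphic
to `τ`. -/
def IsOccurrence {k n : ℕ} (τ : Equiv.Perm (Fin k)) (π : Equiv.Perm (Fin n))
    (f : Fin k → Fin n) : Prop :=
  StrictMono f ∧ ∀ a b : Fin k, τ a < τ b ↔ π (f a) < π (f b)

/-- `π` contains the pattern `τ` (at least once). -/
def Contains {k n : ℕ} (τ : Equiv.Perm (Fin k)) (π : Equiv.Perm (Fin n)) : Prop :=
  ∃ f : Fin k → Fin n, IsOccurrence τ π f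

/-- `π` contains the pattern `τ` exactly once. -/
def ContainsOnce {k n : ℕ} (τ : Equiv.Perm (Fin k)) (π : Equiv.Perm (Fin n)) : Prop :=
  ∃! f : Fin k → Fin n, IsOccurrence τ π f

/-- `π` avoids every pattern in the set `T`. -/
def AvoidsSet {n : ℕ} (T : Set Pattern) (π : Equiv.Perm (Fin n)) : Prop :=
  ∀ p ∈ T, ¬ Contains p.2 π

/-- `f_T(n)`: the number of permutations of `{1,…,n}` avoiding every pattern in `T`. -/
noncomputable def avoidCount (T : Set Pattern) (n : ℕ) : ℕ :=
  Nat.card {π : Equiv.Perm (Fin n) // AvoidsSet T π}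

/-- The pattern `132 ∈ S₃` (zero-indexed: `0 ↦ 0, 1 ↦ 2, 2 ↦ 1`). -/
noncomputable def p132 : Equiv.Perm (Fin 3) := Equiv.ofBijective ![0, 2, 1] (by decide)

/-- `pU (m+1)` is the polynomial `p_m(X) = X^{m/2}·U_m(1/(2√X))` built from the Chebyshev
recurrence: `pU 0 = p_{−1} = 0`, `pU 1 = p_0 = 1`, and `p_{m+1} = p_m − X·p_{m−1}`. -/
noncomputable def pU : ℕ → Polynomial ℚ
  | 0 => 0
  | 1 => 1
  | m + 2 => pU (m + 1) - Polynomial.X * pU m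

def H1 (w : List ℕ) : Prop := ∀ x y z, List.Sublist [x,y,z] w → x < z → z < y → False
def H2 (m : ℕ) (w : List ℕ) : Prop := ∀ x y t, List.Sublist (x :: y :: t) w → t.length = m →
  t.Pairwise (· < ·) → (∀ z ∈ t, x < z ∧ y < z) → False

theorem H1_mono {v w : List ℕ} (h : List.Sublist v w) (H : H1 w) : H1 v :=
  fun x y z hs => H x y z (hs.trans h)
theorem H2_mono {m : ℕ} {v w : List ℕ} (h : List.Sublist v w) (H : H2 m w) : H2 m v :=
  fun x y t hs => H x y t (hs.trans h)

theorem H1_gt {L R : List ℕ} {M : ℕ} (hR : ∀ z ∈ R, z < M)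
    (hd : ∀ x ∈ L, ∀ z ∈ R, x ≠ z) (H : H1 (L ++ M :: R)) : ∀ x ∈ L, ∀ z ∈ R, z < x := by
  intro x hx z hz
  by_contra hc
  have := hd x hx z hz
  refine H x M z ?_ (by omega) (hR z hz)
  have : [x, M, z] = [x] ++ M :: [z] := rfl
  rw [this]
  exact (List.singleton_sublist.2 hx).append ((List.singleton_sublist.2 hz).cons_cons _)

theorem H1_app {L R : List ℕ} {M : ℕ} (hL : ∀ z ∈ L, z < M) (hR : ∀ z ∈ R, z < M)
    (hLR : ∀ x ∈ L, ∀ z ∈ R, z < x) (h1 : H1 L) (h2 : H1 R) : H1 (L ++ M :: R) := by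
  intro x y z hs hxz hzy
  rw [List.sublist_append_iff] at hs
  obtain ⟨l1, l2, he, h3, h4⟩ := hs
  rcases l1 with _ | ⟨a, l1⟩
  · simp only [List.nil_append] at he
    subst he
    rw [List.sublist_cons_iff] at h4
    rcases h4 with h4 | ⟨r, he, h4⟩
    · exact h2 x y z h4 hxz hzy
    · simp only [List.cons.injEq] at he
      obtain ⟨rfl, rfl⟩ := he
      have := hR z (h4.subset (by simp))
      omega
  · simp only [List.cons_append, List.cons.injEq] at he
    obtain ⟨rfl, he⟩ := he
    have hx : x ∈ L := h3.subset (by simp)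
    have hz : z ∈ l1 ∨ z ∈ l2 := by
      rw [← List.mem_append, ← he]; simp
    have hyy : y ∈ l1 ∨ y ∈ l2 := by
      rw [← List.mem_append, ← he]; simp
    have hxM := hL x hx
    have key : ∀ u ∈ l2, u = M ∨ u ∈ R := fun u hu => by simpa using h4.subset hu
    rcases l2 with _ | ⟨b, l2⟩
    · simp only [List.append_nil] at he
      subst he
      exact h1 x y z h3 hxz hzy
    · have hz2 : z ∈ b :: l2 := by
        have h5 := congrArg List.getLast? he
        rw [List.getLast?_append] at h5
        have : (b :: l2).getLast? = some z := by
          rcases h6 : (b :: l2).getLast? with _ | u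
          · simp at h6
          · rw [h6] at h5; simpa using h5.symm
        exact List.mem_of_getLast? this
      rcases key z hz2 with rfl | hzR
      · rcases hyy with hy | hy
        · have := hL y (h3.subset (by simp [hy])); omega
        · rcases key y hy with rfl | h
          · omega
          · have := hR y h; omega
      · have := hLR x hx z hzR; omega

theorem H2_app {m : ℕ} {L R : List ℕ} {M : ℕ} (hR : ∀ z ∈ R, z < M)
    (hLR : ∀ x ∈ L, ∀ z ∈ R, z < x) (h1 : H2 m L) (h2 : H2 (m+1) R) :
    H2 (m+1) (L ++ M :: R) := by
  intro x y t hs hlen hp hb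
  rcases List.eq_nil_or_concat t with rfl | ⟨t', z, rfl⟩
  · simp at hlen
  simp only [List.concat_eq_append] at *
  have hlen' : t'.length = m := by simpa using hlen
  have hp' := hp
  rw [List.pairwise_append] at hp
  obtain ⟨hpt, -, hpz⟩ := hp
  have hfin : ¬ List.Sublist (x :: y :: t') L := fun hh =>
    h1 x y t' hh hlen' hpt (fun u hu => hb u (by simp [hu]))
  have hlt : ∀ u ∈ x :: y :: t', u < z := by
    intro u hu
    simp only [List.mem_cons] at hu
    rcases hu with rfl | rfl | hu
    · exact (hb z (by simp)).1
    · exact (hb z (by simp)).2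
    · exact hpz u hu z (by simp)
  have hs' := hs
  rw [List.sublist_append_iff] at hs
  obtain ⟨l1, l2, he, h3, h4⟩ := hs
  rcases List.eq_nil_or_concat l2 with rfl | ⟨l2, z', rfl⟩
  · apply hfin
    rw [List.append_nil] at he
    rw [← he] at h3
    refine List.Sublist.trans ?_ h3
    simp
  simp only [List.concat_eq_append] at *
  have he2 : (x :: y :: t') ++ [z] = (l1 ++ l2) ++ [z'] := by simpa using he
  obtain ⟨he3, he4⟩ := List.append_inj' he2 rfl
  obtain rfl : z = z' := by simpa using he4
  rw [List.sublist_cons_iff] at h4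
  rcases h4 with h4 | ⟨r, he5, h4⟩
  · have hz : z ∈ R := h4.subset (by simp)
    rcases l1 with _ | ⟨a, l1⟩
    · apply h2 x y (t' ++ [z]) _ hlen hp' hb
      rw [he]; simpa using h4
    · have := hLR a (h3.subset (by simp)) z hz
      have := hlt a (by rw [he3]; simp)
      omega
  · rcases l2 with _ | ⟨b, l2⟩
    · apply hfin; rw [he3]; simpa using h3
    · simp only [List.cons_append, List.cons.injEq] at he5
      obtain ⟨rfl, rfl⟩ := he5
      have := hR z (h4.subset (by simp))
      have := hlt b (by rw [he3]; simp)
      omega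

theorem H2_left {m : ℕ} {L R : List ℕ} {M : ℕ} (hL : ∀ z ∈ L, z < M)
    (h : H2 (m+1) (L ++ M :: R)) : H2 m L := by
  intro x y t hs hlen hp hb
  have hs2 : List.Sublist ((x :: y :: t) ++ [M]) (L ++ M :: R) := hs.append (by simp)
  refine h x y (t ++ [M]) (by simpa using hs2) (by simp [hlen]) ?_ ?_
  · rw [List.pairwise_append]
    refine ⟨hp, by simp, ?_⟩
    intro a ha b hbb
    simp only [List.mem_singleton] at hbb
    subst hbb
    exact hL a (hs.subset (by simp [ha]))
  · intro z hz
    simp only [List.mem_append, List.mem_singleton] at hz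
    rcases hz with hz | rfl
    · exact hb z hz
    · exact ⟨hL x (hs.subset (by simp)), hL y (hs.subset (by simp))⟩

def SS (m a n : ℕ) : Type := {w : List ℕ // w.Perm (List.range' a n) ∧ H1 w ∧ H2 m w}

instance (m a n : ℕ) : Finite (SS m a n) := by
  have : Set.Finite {w : List ℕ | w ∈ (List.range' a n).permutations} := List.finite_toSet _
  exact Set.Finite.subset this (fun w hw => by
    simp only [Set.mem_ofPred_eq, List.mem_permutations]; exact hw.1)

theorem split_range {a n : ℕ} {L R : List ℕ} (h : (L ++ R).Perm (List.range' a n))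
    (hLR : ∀ x ∈ L, ∀ z ∈ R, z < x) :
    R.Perm (List.range' a R.length) ∧ L.Perm (List.range' (a + R.length) L.length) := by
  set sR := R.insertionSort (· ≤ ·) with hsR
  set sL := L.insertionSort (· ≤ ·) with hsL
  have pR : sR.Perm R := List.perm_insertionSort _ _
  have pL : sL.Perm L := List.perm_insertionSort _ _
  have hlen : n = R.length + L.length := by
    have := h.length_eq; simp at this; omega
  have h1 : (sR ++ sL).Perm (List.range' a n) :=
    ((pR.append pL).trans List.perm_append_comm).trans h
  have h2 : (sR ++ sL).Pairwise (· ≤ ·) := by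
    rw [List.pairwise_append]
    refine ⟨List.pairwise_insertionSort _ _, List.pairwise_insertionSort _ _, ?_⟩
    intro z hz x hx
    exact (hLR x (pL.subset hx) z (pR.subset hz)).le
  have h3 : sR ++ sL = List.range' a n :=
    List.Perm.eq_of_pairwise' h2 ((List.pairwise_lt_range').imp le_of_lt) h1
  rw [hlen, ← List.range'_append_1] at h3
  obtain ⟨h4, h5⟩ := List.append_inj h3 (by simpa using pR.length_eq)
  exact ⟨h4 ▸ pR.symm, h5 ▸ pL.symm⟩

theorem lt_of_perm {a n : ℕ} {w : List ℕ} (h : w.Perm (List.range' a n)) :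
    ∀ x ∈ w, a ≤ x ∧ x < a + n := by
  intro x hx
  simpa using h.subset hx

def glue (m a n : ℕ) (s : Σ p : Finset.HasAntidiagonal.antidiagonal n, SS m (a + p.1.2) p.1.1 × SS (m+1) a p.1.2) :
    SS (m+1) a (n+1) :=
  ⟨s.2.1.1 ++ (a + n) :: s.2.2.1, by
    obtain ⟨⟨⟨i, j⟩, hp⟩, ⟨L, hL, hL1, hL2⟩, ⟨R, hR, hR1, hR2⟩⟩ := s
    have hq : i + j = n := Finset.HasAntidiagonal.mem_antidiagonal.1 hp
    change L.Perm (List.range' (a + j) i) at hL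
    change R.Perm (List.range' a j) at hR
    change (L ++ (a + n) :: R).Perm _ ∧ H1 (L ++ (a + n) :: R) ∧ H2 (m+1) (L ++ (a + n) :: R)
    have bL := lt_of_perm hL
    have bR := lt_of_perm hR
    have c1 : ∀ z ∈ L, z < a + n := fun z hz => by have := bL z hz; omega
    have c2 : ∀ z ∈ R, z < a + n := fun z hz => by have := bR z hz; omega
    have c3 : ∀ x ∈ L, ∀ z ∈ R, z < x := fun x hx z hz => by
      have := bL x hx; have := bR z hz; omega
    refine ⟨?_, H1_app c1 c2 c3 hL1 hR1, H2_app c2 c3 hL2 hR2⟩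
    rw [List.range'_concat, one_mul]
    refine List.perm_middle.trans ?_
    refine List.Perm.trans ?_ (List.perm_append_singleton _ _).symm
    have h5 : (L ++ R).Perm (List.range' a n) := by
      rw [← hq, add_comm i j, ← List.range'_append_1]
      exact (hL.append hR).trans List.perm_append_comm
    exact h5.cons _⟩

theorem glue_bij (m a n : ℕ) : Function.Bijective (glue m a n) := by
  constructor
  · rintro ⟨⟨⟨i, j⟩, hp⟩, ⟨L, hL, hL1, hL2⟩, ⟨R, hR, hR1, hR2⟩⟩
      ⟨⟨⟨i', j'⟩, hp'⟩, ⟨L', hL', hL1', hL2'⟩, ⟨R', hR', hR1', hR2'⟩⟩ h0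
    have h : L ++ (a + n) :: R = L' ++ (a + n) :: R' := congrArg Subtype.val h0
    clear h0
    have hq : i + j = n := Finset.HasAntidiagonal.mem_antidiagonal.1 hp
    change L.Perm (List.range' (a + j) i) at hL
    change R.Perm (List.range' a j) at hR
    change L'.Perm (List.range' (a + j') i') at hL'
    change R'.Perm (List.range' a j') at hR'
    have bL := lt_of_perm hL
    have bR := lt_of_perm hR
    rw [List.append_cons_inj_of_notMem (fun hh => by have := bL _ hh; omega)
      (fun hh => by have := bR _ hh; omega)] at h
    obtain ⟨rfl, -, rfl⟩ := h
    have e1 := hL.length_eq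
    have e2 := hL'.length_eq
    have e3 := hR.length_eq
    have e4 := hR'.length_eq
    simp only [List.length_range'] at e1 e2 e3 e4
    subst e1 e3
    subst e2 e4
    rfl
  · rintro ⟨w, hw, h1, h2⟩
    have hM : a + n ∈ w := hw.symm.subset (by simp)
    obtain ⟨L, R, rfl⟩ := List.append_of_mem hM
    have hnd : (L ++ (a + n) :: R).Nodup := hw.symm.nodup List.nodup_range'
    have hw' : (L ++ R).Perm (List.range' a n) := by
      rw [List.range'_concat, one_mul] at hw
      exact (List.perm_middle.symm.trans (hw.trans (List.perm_append_singleton _ _))).cons_inv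
    have b := lt_of_perm hw'
    have c1 : ∀ z ∈ L, z < a + n := fun z hz => (b z (by simp [hz])).2
    have c2 : ∀ z ∈ R, z < a + n := fun z hz => (b z (by simp [hz])).2
    have hnd' : (L ++ R).Nodup := hw'.symm.nodup List.nodup_range'
    have c3 := H1_gt c2 (fun x hx z hz => (List.nodup_append.1 hnd').2.2 x hx z hz) h1
    obtain ⟨d1, d2⟩ := split_range hw' c3
    have hlen := hw'.length_eq
    simp only [List.length_append, List.length_range'] at hlen
    refine ⟨⟨⟨(L.length, R.length), by simpa using hlen⟩,
      ⟨L, d2, H1_mono (by simp) h1, H2_left c1 h2⟩,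
      ⟨R, d1, H1_mono ?_ h1, H2_mono ?_ h2⟩⟩, rfl⟩
    all_goals exact (List.sublist_cons_self _ _).trans (List.sublist_append_right _ _)

theorem card_rec (m a n : ℕ) : Nat.card (SS (m+1) a (n+1)) =
    ∑ p ∈ Finset.HasAntidiagonal.antidiagonal n, Nat.card (SS m (a + p.2) p.1) * Nat.card (SS (m+1) a p.2) := by
  rw [← Nat.card_congr (Equiv.ofBijective _ (glue_bij m a n)), Nat.card_sigma]
  simp_rw [Nat.card_prod]
  exact Finset.sum_coe_sort (Finset.HasAntidiagonal.antidiagonal n)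
    (fun p => Nat.card (SS m (a + p.2) p.1) * Nat.card (SS (m+1) a p.2))

theorem card_small (m a : ℕ) : Nat.card (SS m a 0) = 1 := by
  rw [Nat.card_eq_one_iff_unique]
  refine ⟨⟨?_⟩, ⟨⟨[], by simp, ?_, ?_⟩⟩⟩
  · rintro ⟨u, hu, _⟩ ⟨v, hv, _⟩
    simp at hu hv
    subst hu hv; rfl
  · intro x y z h; simp at h
  · intro x y z h; simp at h

theorem card_one (a : ℕ) : Nat.card (SS 0 a 1) = 1 := by
  rw [Nat.card_eq_one_iff_unique]
  refine ⟨⟨?_⟩, ⟨⟨[a], by simp, ?_, ?_⟩⟩⟩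
  · rintro ⟨u, hu, _⟩ ⟨v, hv, _⟩
    simp at hu hv
    subst hu hv; rfl
  · intro x y z h; simpa using h.length_le
  · intro x y z h; simpa using h.length_le

theorem card_two (a n : ℕ) : Nat.card (SS 0 a (n+2)) = 0 := by
  rw [Nat.card_eq_zero]
  left
  refine ⟨?_⟩
  rintro ⟨w, hw, h1, h2⟩
  have := hw.length_eq
  rcases w with _ | ⟨x, _ | ⟨y, t⟩⟩
  · simp at this
  · simp at this
  · exact h2 x y [] (by simp) rfl (by simp) (by simp)

theorem card_shift (n : ℕ) : ∀ m a, Nat.card (SS m a n) = Nat.card (SS m 0 n) := by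
  induction n using Nat.strong_induction_on with
  | _ n ih =>
    intro m a
    rcases n with _ | n
    · simp [card_small]
    rcases m with _ | m
    · rcases n with _ | n
      · simp [card_one]
      · simp [card_two]
    rw [card_rec, card_rec]
    refine Finset.sum_congr rfl fun p hp => ?_
    rw [Finset.HasAntidiagonal.mem_antidiagonal] at hp
    rw [ih p.1 (by omega) m (a + p.2), ih p.1 (by omega) m (0 + p.2),
      ih p.2 (by omega) (m+1) a]

noncomputable def FF (m : ℕ) : PowerSeries ℚ := PowerSeries.mk fun n => (Nat.card (SS m 0 n) : ℚ)

theorem FF_zero : FF 0 = 1 + PowerSeries.X := by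
  ext n
  rcases n with _ | _ | n
  · simp [FF, card_small]
  · simp [FF, card_one, PowerSeries.coeff_one]
  · simp [FF, card_two, PowerSeries.coeff_one, PowerSeries.coeff_X]

theorem FF_succ (m : ℕ) : FF (m+1) = 1 + PowerSeries.X * (FF m * FF (m+1)) := by
  ext n
  rcases n with _ | n
  · simp [FF, card_small]
  · rw [map_add, PowerSeries.coeff_succ_X_mul, PowerSeries.coeff_mul]
    simp only [FF, PowerSeries.coeff_mk, PowerSeries.coeff_one]
    rw [card_rec]
    simp only [Nat.succ_ne_zero, if_false, zero_add, Nat.cast_sum, Nat.cast_mul]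
    refine Finset.sum_congr rfl fun p hp => ?_
    rw [card_shift]

theorem FF_main (m : ℕ) : FF (m+1) * ((pU (m + 3) : PowerSeries ℚ)
          - PowerSeries.X ^ 2 * (pU (m + 1) : PowerSeries ℚ))
      = (pU (m + 2) : PowerSeries ℚ)
          - PowerSeries.X ^ 2 * (pU m : PowerSeries ℚ) := by
  have hr : ∀ m, (pU (m+2) : PowerSeries ℚ) = (pU (m+1) : PowerSeries ℚ) - PowerSeries.X * (pU m : PowerSeries ℚ) := by
    intro m; rw [pU]; simp
  have h0 : (pU 0 : PowerSeries ℚ) = 0 := by simp [pU]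
  have h1 : (pU 1 : PowerSeries ℚ) = 1 := by simp [pU]
  induction m with
  | zero =>
    have h := FF_succ 0
    rw [FF_zero] at h
    simp only [zero_add] at *
    rw [hr 1, hr 0, h0, h1]
    linear_combination h
  | succ m ih =>
    have h := FF_succ (m+1)
    have e4 := hr (m+2)
    have e2 := hr m
    linear_combination ((pU (m+3) : PowerSeries ℚ) - PowerSeries.X ^ 2 * (pU (m+1) : PowerSeries ℚ)) * h
      + PowerSeries.X * FF (m+2) * ih + FF (m+2) * e4 - FF (m+2) * PowerSeries.X ^ 2 * e2

theorem ofFn_sub {k n : ℕ} (g : Fin n → ℕ) (f : Fin k → Fin n) (hf : StrictMono f) :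
    List.Sublist (List.ofFn (fun i => g (f i))) (List.ofFn g) := by
  rw [List.sublist_iff_exists_fin_orderEmbedding_get_eq]
  refine ⟨OrderEmbedding.ofStrictMono
    (fun i => Fin.cast (by simp) (f (Fin.cast (by simp) i))) ?_, ?_⟩
  · intro i j hij
    exact hf hij
  · intro i
    simp
    rfl

theorem sub_ofFn {n : ℕ} (g : Fin n → ℕ) (v : List ℕ) (h : List.Sublist v (List.ofFn g)) :
    ∃ f : Fin v.length → Fin n, StrictMono f ∧ ∀ i, v.get i = g (f i) := by
  rw [List.sublist_iff_exists_fin_orderEmbedding_get_eq] at h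
  obtain ⟨f, hf⟩ := h
  refine ⟨fun i => Fin.cast (by simp) (f i), ?_, ?_⟩
  · intro i j hij
    exact f.strictMono hij
  · intro i
    rw [hf i]
    simp
    rfl

theorem H1_iff {n : ℕ} (π : Equiv.Perm (Fin n)) :
    H1 (List.ofFn fun i => (π i : ℕ)) ↔ ¬ Contains p132 π := by
  have q0 : p132 0 = 0 := rfl
  have q1 : p132 1 = 2 := rfl
  have q2 : p132 2 = 1 := rfl
  constructor
  · rintro H ⟨f, hf, h⟩
    have hs := ofFn_sub (fun i => (π i : ℕ)) f hf
    simp only [List.ofFn_succ, List.ofFn_zero] at hs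
    refine H _ _ _ hs ?_ ?_
    · exact (h 0 2).1 (by rw [q0, q2]; decide)
    · exact (h 2 1).1 (by rw [q1, q2]; decide)
  · intro H x y z hs hxz hzy
    obtain ⟨f, hf, h⟩ := sub_ofFn _ _ hs
    have e0 : x = (π (f 0) : ℕ) := h 0
    have e1 : y = (π (f 1) : ℕ) := h 1
    have e2 : z = (π (f 2) : ℕ) := h 2
    refine H ⟨f, hf, ?_⟩
    intro a b
    change Fin 3 at a b
    rw [Fin.lt_def (a := π (f a))]
    fin_cases a <;> fin_cases b <;>
      simp [q0, q1, q2, ← e0, ← e1, ← e2] <;> omega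

theorem H2_iff {n m : ℕ} (π : Equiv.Perm (Fin n)) :
    H2 (m+1) (List.ofFn fun i => (π i : ℕ)) ↔ ¬ Contains (1 : Equiv.Perm (Fin (m + 3))) π ∧
          ¬ Contains (Equiv.swap (0 : Fin (m + 3)) 1) π := by
  have hsw : ∀ i : Fin (m+1), Equiv.swap (0 : Fin (m + 3)) 1 i.succ.succ = i.succ.succ := by
    intro i
    apply Equiv.swap_apply_of_ne_of_ne
    · exact Fin.succ_ne_zero _
    · intro h
      exact Fin.succ_ne_zero i (Fin.succ_injective _ h)
  have gen : ∀ σ : Equiv.Perm (Fin (m+3)), (∀ i : Fin (m+1), σ i.succ.succ = i.succ.succ) →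
      (∀ i : Fin (m+1), σ 0 < i.succ.succ) → (∀ i : Fin (m+1), σ 1 < i.succ.succ) →
      H2 (m+1) (List.ofFn fun i => (π i : ℕ)) → ¬ Contains σ π := by
    rintro σ h1 h2 h3 H ⟨f, hf, h⟩
    have hs := ofFn_sub (fun i => (π i : ℕ)) f hf
    rw [List.ofFn_succ, List.ofFn_succ] at hs
    refine H _ _ _ hs (by simp) ?_ ?_
    · rw [List.pairwise_ofFn]
      intro i j hij
      exact (h _ _).1 (by rw [h1, h1]; simpa using hij)
    · intro z hz
      rw [List.mem_ofFn] at hz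
      obtain ⟨i, rfl⟩ := hz
      exact ⟨(h _ _).1 (by rw [h1]; exact h2 i), (h _ _).1 (by rw [h1]; exact h3 i)⟩
  have lt0 : ∀ i : Fin (m+1), (0 : Fin (m+3)) < i.succ.succ := fun i => Fin.succ_pos _
  have lt1 : ∀ i : Fin (m+1), (1 : Fin (m+3)) < i.succ.succ := fun i => by
    have : (1 : Fin (m+3)) = Fin.succ 0 := rfl
    rw [this, Fin.succ_lt_succ_iff]; exact Fin.succ_pos _
  constructor
  · intro H
    exact ⟨gen 1 (fun i => rfl) lt0 lt1 H,
      gen _ hsw (by simpa using lt1) (by simpa using lt0) H⟩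
  · rintro ⟨n1, n2⟩ x y t hs hlen hp hb
    obtain ⟨f, hf, h⟩ := sub_ofFn _ _ hs
    have hlen' : m + 3 = (x :: y :: t).length := by simp [hlen]
    set f' : Fin (m+3) → Fin n := fun i => f (Fin.cast hlen' i) with hf'
    have hfm : StrictMono f' := fun i j hij => hf hij
    have e0 : x = (π (f' 0) : ℕ) := h ⟨0, by simp⟩
    have e1 : y = (π (f' 1) : ℕ) := h ⟨1, by simp⟩
    have et : ∀ i : Fin (m+1), t.get (Fin.cast hlen.symm i) = (π (f' i.succ.succ) : ℕ) :=
      fun i => h (Fin.cast hlen' i.succ.succ)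
    have key : ∀ σ : Equiv.Perm (Fin (m+3)), (∀ i : Fin (m+1), σ i.succ.succ = i.succ.succ) →
        ((σ 0 = 0 ∧ σ 1 = 1 ∧ x < y) ∨ (σ 0 = 1 ∧ σ 1 = 0 ∧ y < x)) → Contains σ π := by
      intro σ h1 h2
      have hb0 : ∀ i : Fin (m+1), π (f' 0) < π (f' i.succ.succ) := fun i => by
        rw [Fin.lt_def, ← e0, ← et]; exact (hb _ (List.get_mem _ _)).1
      have hb1 : ∀ i : Fin (m+1), π (f' 1) < π (f' i.succ.succ) := fun i => by
        rw [Fin.lt_def, ← e1, ← et]; exact (hb _ (List.get_mem _ _)).2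
      have hbt : ∀ i j : Fin (m+1), i < j → π (f' i.succ.succ) < π (f' j.succ.succ) := by
        intro i j hij
        rw [Fin.lt_def, ← et, ← et]
        exact List.pairwise_iff_get.1 hp _ _ hij
      have hsm : ∀ a b : Fin (m+3), σ a < σ b → π (f' a) < π (f' b) := by
        have cs : ∀ a : Fin (m+3), a = 0 ∨ a = 1 ∨ ∃ i : Fin (m+1), a = i.succ.succ := by
          intro a
          refine Fin.cases (Or.inl rfl) (fun a => ?_) a
          refine Fin.cases (Or.inr (Or.inl rfl)) (fun a => ?_) a
          exact Or.inr (Or.inr ⟨a, rfl⟩)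
        have z1 : (0 : Fin (m+3)) < 1 := by simp [Fin.lt_def]
        intro a b hab
        rcases cs a with rfl | rfl | ⟨i, rfl⟩ <;> rcases cs b with rfl | rfl | ⟨j, rfl⟩
        · exact absurd hab (lt_irrefl _)
        · rcases h2 with ⟨s0, s1, hxy⟩ | ⟨s0, s1, hxy⟩
          · rw [Fin.lt_def]; omega
          · rw [s0, s1] at hab; exact absurd hab z1.asymm
        · exact hb0 j
        · rcases h2 with ⟨s0, s1, hxy⟩ | ⟨s0, s1, hxy⟩
          · rw [s0, s1] at hab; exact absurd hab z1.asymm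
          · rw [Fin.lt_def]; omega
        · exact absurd hab (lt_irrefl _)
        · exact hb1 j
        · rw [h1] at hab
          rcases h2 with ⟨s0, s1, hxy⟩ | ⟨s0, s1, hxy⟩ <;> rw [s0] at hab
          · exact absurd hab (lt0 i).asymm
          · exact absurd hab (lt1 i).asymm
        · rw [h1] at hab
          rcases h2 with ⟨s0, s1, hxy⟩ | ⟨s0, s1, hxy⟩ <;> rw [s1] at hab
          · exact absurd hab (lt1 i).asymm
          · exact absurd hab (lt0 i).asymm
        · rw [h1, h1] at hab
          exact hbt i j (by simpa using hab)
      refine ⟨f', hfm, fun a b => ⟨hsm a b, fun hab => ?_⟩⟩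
      rcases lt_trichotomy (σ a) (σ b) with hh | hh | hh
      · exact hh
      · rw [σ.injective hh] at hab; exact absurd hab (lt_irrefl _)
      · exact absurd hab (hsm b a hh).asymm
    rcases lt_trichotomy x y with hxy | hxy | hxy
    · exact n1 (key 1 (fun i => rfl) (Or.inl ⟨rfl, rfl, hxy⟩))
    · have : f' 0 = f' 1 := π.injective (Fin.ext (by omega))
      have := hfm.injective this
      simp [Fin.ext_iff] at this
    · exact n2 (key _ hsw (Or.inr ⟨by simp, by simp, hxy⟩))

theorem card_eq (m n : ℕ) : Nat.card {π : Equiv.Perm (Fin n) //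
        ¬ Contains p132 π ∧ ¬ Contains (1 : Equiv.Perm (Fin (m + 3))) π ∧
          ¬ Contains (Equiv.swap (0 : Fin (m + 3)) 1) π} = Nat.card (SS (m+1) 0 n) := by
  have hperm : ∀ π : Equiv.Perm (Fin n),
      (List.ofFn fun i => (π i : ℕ)).Perm (List.range' 0 n) := by
    intro π
    have hnd : (List.ofFn fun i => (π i : ℕ)).Nodup :=
      List.nodup_ofFn.2 (Fin.val_injective.comp π.injective)
    rw [List.perm_ext_iff_of_nodup hnd List.nodup_range']
    intro x
    simp only [List.mem_ofFn, List.mem_range'_1]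
    constructor
    · rintro ⟨i, rfl⟩; simp
    · rintro ⟨-, hx⟩
      exact ⟨π.symm ⟨x, by omega⟩, by simp⟩
  refine Nat.card_congr (Equiv.ofBijective
    (fun π => (⟨List.ofFn fun i => (π.1 i : ℕ), hperm π.1, (H1_iff _).2 π.2.1,
      (H2_iff _).2 π.2.2⟩ : SS (m+1) 0 n)) ⟨?_, ?_⟩)
  · rintro ⟨π, _⟩ ⟨π', _⟩ h
    have h := congrArg Subtype.val h
    simp only [List.ofFn_inj] at h
    apply Subtype.ext
    ext i
    exact congrFun h i
  · rintro ⟨w, hw, h1, h2⟩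
    have hl : w.length = n := by simpa using hw.length_eq
    have hnd : w.Nodup := hw.symm.nodup List.nodup_range'
    subst hl
    have hb := lt_of_perm hw
    let g : Fin w.length → Fin w.length := fun i => ⟨w.get i, by
      have := hb _ (List.get_mem w i); omega⟩
    have hg : Function.Injective g := by
      intro i j hij
      exact List.nodup_iff_injective_get.1 hnd (congrArg Fin.val hij)
    let π : Equiv.Perm (Fin w.length) := Equiv.ofBijective g (Finite.injective_iff_bijective.1 hg)
    have hπ : (List.ofFn fun i => (π i : ℕ)) = w := List.ofFn_get w
    refine ⟨⟨π, ?_, ?_⟩, Subtype.ext hπ⟩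
    · rw [← H1_iff, hπ]; exact h1
    · rw [← H2_iff, hπ]; exact h2

/-- Write `k = m + 3 ≥ 3`. Let `12⋯k` be the identity of `S_k` and
`213⋯k = swap 0 1` (zero-indexed). With `q_j = p_j − X²·p_{j−2}` (and `pU (j+1) = p_j`),
the generating function `F` for permutations avoiding `132`, `12⋯k` and `213⋯k`
satisfies `F·q_{k−1} = q_{k−2}`. -/
theorem stmt17 (m : ℕ) :
    (PowerSeries.mk fun n => ((Nat.card {π : Equiv.Perm (Fin n) //
        ¬ Contains p132 π ∧ ¬ Contains (1 : Equiv.Perm (Fin (m + 3))) π ∧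
          ¬ Contains (Equiv.swap (0 : Fin (m + 3)) 1) π} : ℕ) : ℚ))
      * ((pU (m + 3) : PowerSeries ℚ)
          - PowerSeries.X ^ 2 * (pU (m + 1) : PowerSeries ℚ))
      = (pU (m + 2) : PowerSeries ℚ)
          - PowerSeries.X ^ 2 * (pU m : PowerSeries ℚ) := by
  simp_rw [card_eq]
  exact FF_main m
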